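/- arXiv:0907.0477 — 2 statements merged into one kernel-verified Lean document; each statement's English description precedes it below -/
import Mathlib

section
/- Let G = (V,E) be a finite simple graph with edge weights λ: E → [0,1] and node weights μ: V → [0,1], and let i ∈ V have degree exactly 1 with unique incident edge {i,j}. Assume μ(j) + λ({i,j})μ(i) > 0. Let G' = (V',E') with V' = V \ {i} and E' = E \ {{i,j}}; set λ'(e) = λ(e) for e ∈ E', μ'(v) = μ(v) for v ∈ V' \ {j}, and μ'(j) = (μ(j) + λ({i,j})μ(i)) / (1 + λ({i,j})μ(i)μ(j)). Draw X' ∼ π_subs on G' with parameters (λ',μ'); set X(e) = X'(e) for all e ∈ E', and, conditionally on X', set X({i,j}) ∼ Bernoulli(δ) where δ = δ1 = λ({i,j})μ(i)/(μ(j) + λ({i,j})μ(i)) if the degree of j under X' is odd, and δ = δ2 = λ({i,j})μ(i)μ(j)/(1 + λ({i,j})μ(i)μ(j)) if the degree of j under X' is even. Then X ∼ π_subs on G with parameters (λ,μ). -/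
/-- The degree of the vertex `v` under the configuration `x`. -/
def degU4 {V : Type*} [DecidableEq V] (x : Finset (Sym2 V)) (v : V) : ℕ :=
  (x.filter (fun e => v ∈ e)).card

/-- The subgraphs-world weight of a configuration `x`. -/
def wSubs4 {V : Type*} [Fintype V] [DecidableEq V]
    (lam : Sym2 V → ℝ) (mu : V → ℝ) (x : Finset (Sym2 V)) : ℝ :=
  (∏ e ∈ x, lam e) *
    ∏ v ∈ Finset.univ.filter (fun v => Odd (degU4 x v)), mu v

/-! Summing out the edge `{i, j}` above a configuration `y` in which `i` is isolated gives
`w(y) + w(y ∪ {{i, j}}) = w'(y) (1 + λμ(i)μ(j))`: only the factor of `j` is affected, turning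
`μ(j)` into `μ(j) + λμ(i)` if `j` has odd degree in `y`, and `1` into `1 + λμ(i)μ(j)` otherwise.
Hence `π'_subs` is the marginal of `π_subs` on `E'`, and `δ₁`, `δ₂` are the conditional
probabilities of `{i, j}` given the rest of the configuration. -/

section Degree

variable {V : Type*} [DecidableEq V] {x y E : Finset (Sym2 V)} {e : Sym2 V} {v : V}

theorem degU4_insert_of_mem (he : e ∉ x) (hv : v ∈ e) :
    degU4 (insert e x) v = degU4 x v + 1 := by
  have he' : e ∉ x.filter (v ∈ ·) := fun h => he (Finset.mem_of_mem_filter e h)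
  rw [degU4, degU4, Finset.filter_insert, if_pos hv, Finset.card_insert_of_notMem he']

theorem degU4_insert_of_notMem (x : Finset (Sym2 V)) (hv : v ∉ e) :
    degU4 (insert e x) v = degU4 x v := by
  rw [degU4, degU4, Finset.filter_insert, if_neg hv]

theorem degU4_mono (hxy : x ⊆ y) (v : V) : degU4 x v ≤ degU4 y v :=
  Finset.card_le_card (Finset.filter_subset_filter _ hxy)

theorem degU4_eq_zero_of_subset_erase (hdeg : degU4 E v = 1) (he : e ∈ E) (hv : v ∈ e)
    (hy : y ⊆ E.erase e) : degU4 y v = 0 := by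
  have hadd := degU4_insert_of_mem (Finset.notMem_erase e E) hv
  rw [Finset.insert_erase he, hdeg] at hadd
  have hle := degU4_mono hy v
  omega

end Degree

section Weight

variable {V : Type*} [Fintype V] [DecidableEq V] {lam : Sym2 V → ℝ} {mu mu' : V → ℝ}
  {x : Finset (Sym2 V)}

/-- The factor `μ(v)` or `1` that the node `v` contributes to the subgraphs-world weight of `x`,
according to the parity of its degree. -/
def parityFactor {V : Type*} [DecidableEq V] (mu : V → ℝ) (x : Finset (Sym2 V)) (v : V) : ℝ :=
  if Odd (degU4 x v) then mu v else 1

/-- The subgraphs-world weight of `x` without the factors of the nodes in `S`: the part that is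
blind to a change of `μ` on `S`. All edges of `x` are kept, including those inside `S`. -/
def weightOff (lam : Sym2 V → ℝ) (mu : V → ℝ) (S : Finset V) (x : Finset (Sym2 V)) : ℝ :=
  (∏ e ∈ x, lam e) * ∏ v ∈ Sᶜ, parityFactor mu x v

theorem wSubs4_eq_weightOff_mul (lam : Sym2 V → ℝ) (mu : V → ℝ) (S : Finset V)
    (x : Finset (Sym2 V)) :
    wSubs4 lam mu x = weightOff lam mu S x * ∏ v ∈ S, parityFactor mu x v := by
  rw [wSubs4, weightOff, mul_assoc, Finset.prod_compl_mul_prod, Finset.prod_filter]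
  rfl

theorem weightOff_congr {S : Finset V} (h : ∀ v ∉ S, mu' v = mu v) :
    weightOff lam mu' S x = weightOff lam mu S x := by
  unfold weightOff parityFactor
  congr 1
  exact Finset.prod_congr rfl fun v hv => by rw [h v (Finset.mem_compl.1 hv)]

theorem weightOff_insert {S : Finset V} {e : Sym2 V} (he : e ∉ x) (heS : ∀ v ∈ e, v ∈ S) :
    weightOff lam mu S (insert e x) = lam e * weightOff lam mu S x := by
  unfold weightOff parityFactor
  rw [Finset.prod_insert he, mul_assoc]
  congr 2
  refine Finset.prod_congr rfl fun v hv => ?_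
  rw [degU4_insert_of_notMem x fun hve => Finset.mem_compl.1 hv (heS v hve)]

theorem wSubs4_empty (lam : Sym2 V → ℝ) (mu : V → ℝ) : wSubs4 lam mu ∅ = 1 := by
  simp [wSubs4, degU4]

theorem wSubs4_nonneg (hlam : ∀ e ∈ x, 0 ≤ lam e) (hmu : ∀ v, 0 ≤ mu v) :
    0 ≤ wSubs4 lam mu x :=
  mul_nonneg (Finset.prod_nonneg hlam) (Finset.prod_nonneg fun v _ => hmu v)

theorem sum_powerset_wSubs4_pos {E : Finset (Sym2 V)} (hlam : ∀ e ∈ E, 0 ≤ lam e)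
    (hmu : ∀ v, 0 ≤ mu v) : 0 < ∑ y ∈ E.powerset, wSubs4 lam mu y := by
  have hnonneg : ∀ y ∈ E.powerset, 0 ≤ wSubs4 lam mu y := fun y hy =>
    wSubs4_nonneg (fun e he => hlam e (Finset.mem_powerset.1 hy he)) hmu
  refine Finset.sum_pos' hnonneg ⟨∅, Finset.empty_mem_powerset E, ?_⟩
  rw [wSubs4_empty]
  exact one_pos

end Weight

section Leaf

variable {V : Type*} [Fintype V] [DecidableEq V] {lam : Sym2 V → ℝ} {mu mu' : V → ℝ}
  {i j : V} {y : Finset (Sym2 V)}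

theorem wSubs4_of_degU4_eq_zero (hij : i ≠ j) (hi : degU4 y i = 0) :
    wSubs4 lam mu y = weightOff lam mu {i, j} y * parityFactor mu y j := by
  have hfactor : parityFactor mu y i = 1 := by simp [parityFactor, hi]
  rw [wSubs4_eq_weightOff_mul lam mu {i, j}, Finset.prod_pair hij, hfactor, one_mul]

theorem wSubs4_insert_of_degU4_eq_zero (hij : i ≠ j) (hi : degU4 y i = 0) (hy : s(i, j) ∉ y) :
    wSubs4 lam mu (insert s(i, j) y) = weightOff lam mu {i, j} y *
      (lam s(i, j) * mu i * if Odd (degU4 y j) then 1 else mu j) := by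
  have hfactor_i : parityFactor mu (insert s(i, j) y) i = mu i := by
    simp [parityFactor, degU4_insert_of_mem hy (Sym2.mem_mk_left i j), hi]
  have hfactor_j : parityFactor mu (insert s(i, j) y) j =
      if Odd (degU4 y j) then 1 else mu j := by
    simp only [parityFactor, degU4_insert_of_mem hy (Sym2.mem_mk_right i j), Nat.odd_add_one,
      ite_not]
  rw [wSubs4_eq_weightOff_mul lam mu {i, j}, Finset.prod_pair hij, hfactor_i, hfactor_j,
    weightOff_insert hy fun v hv => by simpa using hv]
  ring

/-- The conditional probability `δ` of the edge `{i, j}` at the leaf `i`, given that the rest of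
the configuration is `y`. -/
noncomputable def leafEdgeProb {V : Type*} [DecidableEq V] (lam : Sym2 V → ℝ) (mu : V → ℝ)
    (i j : V) (y : Finset (Sym2 V)) : ℝ :=
  if Odd (degU4 y j) then lam s(i, j) * mu i / (mu j + lam s(i, j) * mu i)
  else lam s(i, j) * mu i * mu j / (1 + lam s(i, j) * mu i * mu j)

/-- The node weights `mu'` arise from `mu` by removing the leaf `i` attached to `j`. The value at
`i` is left free, since `i` is not a node of the reduced graph. -/
structure IsLeafReduction {V : Type*} (lam : Sym2 V → ℝ) (mu mu' : V → ℝ) (i j : V) : Prop where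
  eq_of_ne : ∀ v, v ≠ i → v ≠ j → mu' v = mu v
  apply_neighbor :
    mu' j = (mu j + lam s(i, j) * mu i) / (1 + lam s(i, j) * mu i * mu j)

namespace IsLeafReduction

theorem mul_wSubs4 (h : IsLeafReduction lam mu mu' i j) (hij : i ≠ j) (hi : degU4 y i = 0)
    (hc : 1 + lam s(i, j) * mu i * mu j ≠ 0) :
    (1 + lam s(i, j) * mu i * mu j) * wSubs4 lam mu' y = weightOff lam mu {i, j} y *
      if Odd (degU4 y j) then mu j + lam s(i, j) * mu i
      else 1 + lam s(i, j) * mu i * mu j := by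
  have hoff : weightOff lam mu' {i, j} y = weightOff lam mu {i, j} y :=
    weightOff_congr fun v hv => by
      simp only [Finset.mem_insert, Finset.mem_singleton, not_or] at hv
      exact h.eq_of_ne v hv.1 hv.2
  rw [wSubs4_of_degU4_eq_zero hij hi, hoff, parityFactor, h.apply_neighbor, mul_left_comm,
    mul_ite, mul_div_cancel₀ _ hc, mul_one]

theorem wSubs4_add_wSubs4_insert (h : IsLeafReduction lam mu mu' i j) (hij : i ≠ j)
    (hi : degU4 y i = 0) (hy : s(i, j) ∉ y) (hc : 1 + lam s(i, j) * mu i * mu j ≠ 0) :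
    wSubs4 lam mu y + wSubs4 lam mu (insert s(i, j) y) =
      (1 + lam s(i, j) * mu i * mu j) * wSubs4 lam mu' y := by
  rw [h.mul_wSubs4 hij hi hc, wSubs4_of_degU4_eq_zero hij hi,
    wSubs4_insert_of_degU4_eq_zero hij hi hy, parityFactor]
  split_ifs <;> ring

theorem wSubs4_insert (h : IsLeafReduction lam mu mu' i j) (hij : i ≠ j)
    (hi : degU4 y i = 0) (hy : s(i, j) ∉ y) (hb : mu j + lam s(i, j) * mu i ≠ 0)
    (hc : 1 + lam s(i, j) * mu i * mu j ≠ 0) :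
    wSubs4 lam mu (insert s(i, j) y) =
      (1 + lam s(i, j) * mu i * mu j) * wSubs4 lam mu' y * leafEdgeProb lam mu i j y := by
  rw [h.mul_wSubs4 hij hi hc, wSubs4_insert_of_degU4_eq_zero hij hi hy, leafEdgeProb,
    mul_assoc (weightOff lam mu {i, j} y)]
  congr 1
  split_ifs
  · rw [mul_div_cancel₀ _ hb, mul_one]
  · rw [mul_div_cancel₀ _ hc]

theorem wSubs4_eq_mul_wSubs4_erase (h : IsLeafReduction lam mu mu' i j) (hij : i ≠ j)
    {x : Finset (Sym2 V)} (hi : degU4 (x.erase s(i, j)) i = 0)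
    (hb : mu j + lam s(i, j) * mu i ≠ 0) (hc : 1 + lam s(i, j) * mu i * mu j ≠ 0) :
    wSubs4 lam mu x = (1 + lam s(i, j) * mu i * mu j) * wSubs4 lam mu' (x.erase s(i, j)) *
      if s(i, j) ∈ x then leafEdgeProb lam mu i j (x.erase s(i, j))
      else 1 - leafEdgeProb lam mu i j (x.erase s(i, j)) := by
  have hmem := Finset.notMem_erase s(i, j) x
  have hon := h.wSubs4_insert hij hi hmem hb hc
  have hsum := h.wSubs4_add_wSubs4_insert hij hi hmem hc
  split_ifs with hx
  · rwa [Finset.insert_erase hx] at hon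
  · rw [mul_one_sub, ← hon, ← hsum, add_sub_cancel_right, Finset.erase_eq_of_notMem hx]

theorem sum_powerset_wSubs4 (h : IsLeafReduction lam mu mu' i j) (hij : i ≠ j)
    {E : Finset (Sym2 V)} (he : s(i, j) ∈ E) (hdeg : degU4 E i = 1)
    (hc : 1 + lam s(i, j) * mu i * mu j ≠ 0) :
    ∑ y ∈ E.powerset, wSubs4 lam mu y =
      (1 + lam s(i, j) * mu i * mu j) *
        ∑ y ∈ (E.erase s(i, j)).powerset, wSubs4 lam mu' y := by
  have hmem := Finset.notMem_erase s(i, j) E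
  conv_lhs => rw [← Finset.insert_erase he]
  rw [Finset.sum_powerset_insert hmem, ← Finset.sum_add_distrib, Finset.mul_sum]
  refine Finset.sum_congr rfl fun y hy => ?_
  have hyE := Finset.mem_powerset.1 hy
  have hi := degU4_eq_zero_of_subset_erase hdeg he (Sym2.mem_mk_left i j) hyE
  exact h.wSubs4_add_wSubs4_insert hij hi (fun hey => hmem (hyE hey)) hc

end IsLeafReduction

end Leaf

theorem stmt4_general {V : Type*} [Fintype V] [DecidableEq V]
    (E : Finset (Sym2 V)) (lam : Sym2 V → ℝ) (mu : V → ℝ)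
    (i j : V) (hij : i ≠ j) (he : s(i, j) ∈ E)
    (hdeg1 : (E.filter (fun e => i ∈ e)).card = 1)
    (hb : mu j + lam s(i, j) * mu i ≠ 0) (hc : 1 + lam s(i, j) * mu i * mu j ≠ 0)
    (hZ : ∑ y ∈ E.powerset, wSubs4 lam mu y ≠ 0)
    (E' : Finset (Sym2 V)) (hE' : E' = E.erase s(i, j))
    (mu' : V → ℝ)
    (hmu'1 : ∀ v : V, v ≠ i → v ≠ j → mu' v = mu v)
    (hmu'2 : mu' j =
      (mu j + lam s(i, j) * mu i) / (1 + lam s(i, j) * mu i * mu j))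
    (δ₁ δ₂ : ℝ)
    (hδ₁ : δ₁ = lam s(i, j) * mu i / (mu j + lam s(i, j) * mu i))
    (hδ₂ : δ₂ = lam s(i, j) * mu i * mu j / (1 + lam s(i, j) * mu i * mu j)) :
    ∀ x ∈ E.powerset,
      (wSubs4 lam mu' (x.erase s(i, j)) /
          (∑ y' ∈ E'.powerset, wSubs4 lam mu' y')) *
        (if s(i, j) ∈ x
          then (if Odd (degU4 (x.erase s(i, j)) j) then δ₁ else δ₂)
          else 1 - (if Odd (degU4 (x.erase s(i, j)) j) then δ₁ else δ₂))
      = wSubs4 lam mu x / (∑ y ∈ E.powerset, wSubs4 lam mu y) := by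
  intro x hx
  subst hE' hδ₁ hδ₂
  have h : IsLeafReduction lam mu mu' i j := ⟨hmu'1, hmu'2⟩
  have hi : degU4 (x.erase s(i, j)) i = 0 :=
    degU4_eq_zero_of_subset_erase hdeg1 he (Sym2.mem_mk_left i j)
      (Finset.erase_subset_erase _ (Finset.mem_powerset.1 hx))
  have hsum := h.sum_powerset_wSubs4 hij he hdeg1 hc
  have hZ' := right_ne_zero_of_mul (hsum ▸ hZ)
  rw [div_mul_eq_mul_div, div_eq_div_iff hZ' hZ, hsum,
    h.wSubs4_eq_mul_wSubs4_erase hij hi hb hc]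
  unfold leafEdgeProb
  ring

/-- Removing a degree-1 node `i` with unique incident edge
`{i,j}`.  On `G' = (V \ {i}, E \ {{i,j}})` set `μ'(j) = (μ(j)+λ({i,j})μ(i)) /
(1+λ({i,j})μ(i)μ(j))` and keep all other weights.  Draw `X' ∼ π_subs` on `G'`
and extend it to `X` on `G` by turning the edge `{i,j}` on with probability
`δ₁ = λμ(i)/(μ(j)+λμ(i))` if `deg_{X'}(j)` is odd, and with probability
`δ₂ = λμ(i)μ(j)/(1+λμ(i)μ(j))` if it is even.  Then `X ∼ π_subs` on `G`:
for every configuration `x ⊆ E`, the probability of producing `x`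
(namely `π'_subs(x \ {{i,j}})` times the appropriate Bernoulli factor)
equals `π_subs(x)`. -/
theorem stmt4 {V : Type*} [Fintype V] [DecidableEq V]
    (E : Finset (Sym2 V)) (hE : ∀ e ∈ E, ¬ e.IsDiag)
    (lam : Sym2 V → ℝ) (mu : V → ℝ)
    (hlam : ∀ e ∈ E, lam e ∈ Set.Icc (0 : ℝ) 1)
    (hmu : ∀ v : V, mu v ∈ Set.Icc (0 : ℝ) 1)
    (i j : V) (hij : i ≠ j) (he : s(i, j) ∈ E)
    (hdeg1 : (E.filter (fun e => i ∈ e)).card = 1)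
    (hpos : 0 < mu j + lam s(i, j) * mu i)
    -- the reduced edge set
    (E' : Finset (Sym2 V)) (hE' : E' = E.erase s(i, j))
    -- the new node weights
    (mu' : V → ℝ)
    (hmu'1 : ∀ v : V, v ≠ i → v ≠ j → mu' v = mu v)
    (hmu'2 : mu' j =
      (mu j + lam s(i, j) * mu i) / (1 + lam s(i, j) * mu i * mu j))
    -- the Bernoulli parameters
    (δ₁ δ₂ : ℝ)
    (hδ₁ : δ₁ = lam s(i, j) * mu i / (mu j + lam s(i, j) * mu i))
    (hδ₂ : δ₂ = lam s(i, j) * mu i * mu j / (1 + lam s(i, j) * mu i * mu j)) :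
    ∀ x ∈ E.powerset,
      (wSubs4 lam mu' (x.erase s(i, j)) /
          (∑ y' ∈ E'.powerset, wSubs4 lam mu' y')) *
        (if s(i, j) ∈ x
          then (if Odd (degU4 (x.erase s(i, j)) j) then δ₁ else δ₂)
          else 1 - (if Odd (degU4 (x.erase s(i, j)) j) then δ₁ else δ₂))
      = wSubs4 lam mu x / (∑ y ∈ E.powerset, wSubs4 lam mu y) := by
  have hc : 0 ≤ lam s(i, j) * mu i * mu j :=
    mul_nonneg (mul_nonneg (hlam _ he).1 (hmu i).1) (hmu j).1
  exact stmt4_general E lam mu i j hij he hdeg1 hpos.ne' (by positivity)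
    (sum_powerset_wSubs4_pos (fun e h => (hlam e h).1) fun v => (hmu v).1).ne'
    E' hE' mu' hmu'1 hmu'2 δ₁ δ₂ hδ₁ hδ₂
end

section
/- Let G = (V,E) be a finite simple graph in which every node has degree exactly 3, with edge weights λ: E → [0,1] and node weights μ: V → (0,1]. Construct G' = (V',E') exactly as in the zero-field case: for each node i with neighbors n(i,1), n(i,2), n(i,3), A_i = {d_i, v_{i,n(i,1)}, v_{i,n(i,2)}, v_{i,n(i,3)}}, E_i = all 2-element subsets of A_i, V' = ∪_i A_i, and E' = {{v_{ij},v_{ji}} : {i,j} ∈ E} ∪ (∪_i E_i). For each i, let λ2(i) ≥ 0 satisfy the cubic equation μ(i)²(1+λ2(i))³ = 1 + 3λ2(i) + 3λ2(i)², and set λ1(i) = λ2(i)²/(1+λ2(i)) and α(i) = μ(i)(1+λ2(i)). Define edge weights λ' on G' by λ'({v_{ij},v_{ik}}) = λ1(i) for j ≠ k, λ'({d_i,v_{ij}}) = λ2(i), and λ'({v_{ij},v_{ji}}) = λ({i,j})·α(i)·α(j). Let φ({i,j}) = {v_{ij},v_{ji}}. Then the pushforward of the matching distribution π_mat on G' (with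 weights λ') under the map x' ↦ x'∘φ ∈ {0,1}^E equals the subgraphs-world distribution π_subs on G with parameters λ and μ. -/
/-- The degree of the vertex `v` under the configuration `x`. -/
def degU9 {W : Type*} [DecidableEq W] (x : Finset (Sym2 W)) (v : W) : ℕ :=
  (x.filter (fun e => v ∈ e)).card

/-- The subgraphs-world weight of a configuration `x`. -/
def wSubs9 {V : Type*} [Fintype V] [DecidableEq V]
    (lam : Sym2 V → ℝ) (mu : V → ℝ) (x : Finset (Sym2 V)) : ℝ :=
  (∏ e ∈ x, lam e) *
    ∏ v ∈ Finset.univ.filter (fun v => Odd (degU9 x v)), mu v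

/-- The matching weight of a configuration `x`: the product of its edge
weights if no vertex is incident to two or more edges of `x`, else `0`. -/
def wMat9 {W : Type*} [Fintype W] [DecidableEq W]
    (lam : Sym2 W → ℝ) (x : Finset (Sym2 W)) : ℝ :=
  if ∀ v : W, degU9 x v ≤ 1 then ∏ e ∈ x, lam e else 0

/-- The edge correspondence `φ({i,j}) = {v_{ij}, v_{ji}}`, where the new
vertex `v_{ij}` is modeled as `Sum.inr (i,j) : V ⊕ V × V`. -/
def phi9 {V : Type*} : Sym2 V → Sym2 (V ⊕ V × V) :=
  Sym2.lift ⟨fun a b => s(Sum.inr (a, b), Sum.inr (b, a)),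
    fun _ _ => Sym2.eq_swap⟩

/-- The gadget vertices for the original node `i`:
`A_i = {d_i, v_{i,n(i,1)}, v_{i,n(i,2)}, v_{i,n(i,3)}}`, with `d_i`
modeled as `Sum.inl i`. -/
def gadgetVerts9 {V : Type*} [Fintype V] [DecidableEq V]
    (E : Finset (Sym2 V)) (i : V) : Finset (V ⊕ V × V) :=
  insert (Sum.inl i)
    ((Finset.univ.filter (fun j => s(i, j) ∈ E)).image (fun j => Sum.inr (i, j)))

/-- The gadget edges `E_i`: all 2-element subsets of `A_i`. -/
def gadgetEdges9 {V : Type*} [Fintype V] [DecidableEq V]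
    (E : Finset (Sym2 V)) (i : V) : Finset (Sym2 (V ⊕ V × V)) :=
  ((gadgetVerts9 E i ×ˢ gadgetVerts9 E i).filter (fun p => p.1 ≠ p.2)).image
    (fun p => s(p.1, p.2))

/-!
Call an edge `{v_{ij}, v_{ji}}` a link. The links of a configuration `x` on `G` form a matching
`φ(x)`, and deleting its endpoints from the gadgets leaves disjoint complete graphs, where the one
at `i` consists of `d_i` and `3 - d` other vertices, `d` being the degree of `i` under `x`. The
total weight of the matchings of `G'` over `x` is therefore the weight of `φ(x)` times a product of
matching partition functions of complete graphs, which are computed by deleting one vertex at a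
time. Each node `i` contributes `α(i) ^ d` through the weights of the links, and the cubic equation
says exactly that `α(i) ^ d` times the partition function of the gadget left at `i` is
`1 + 3 λ2(i) + 3 λ2(i)²` times `1` or `μ(i)`, according to the parity of `d`. So the pushforward of
the matching weight is a constant multiple of the subgraphs-world weight.
-/

section PowersetSums

open Finset

theorem sum_powerset_union {α M : Type*} [DecidableEq α] [AddCommMonoid M] {s t : Finset α}
    (h : Disjoint s t) (f : Finset α → M) :
    ∑ u ∈ (s ∪ t).powerset, f u = ∑ x ∈ s.powerset, ∑ y ∈ t.powerset, f (x ∪ y) := by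
  induction s using Finset.induction_on generalizing f with
  | empty => simp
  | insert a s ha ih =>
    obtain ⟨hat, hst⟩ := disjoint_insert_left.1 h
    have hnotMem : a ∉ s ∪ t := by simp [ha, hat]
    rw [insert_union, sum_powerset_insert hnotMem, sum_powerset_insert ha, ih hst, ih hst]
    simp only [insert_union]

theorem sum_powerset_fiber {α β M : Type*} [DecidableEq α] [DecidableEq β] [AddCommMonoid M]
    {φ : α → β} (hφ : Function.Injective φ) {E x : Finset α} {G : Finset β}
    (hG : Disjoint (E.image φ) G) (hx : x ⊆ E) (f : Finset β → M) :
    ∑ z ∈ (E.image φ ∪ G).powerset with {e ∈ E | φ e ∈ z} = x, f z =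
      ∑ y ∈ G.powerset, f (x.image φ ∪ y) := by
  have htrace : ∀ s ∈ E.powerset, ∀ y ∈ G.powerset, {e ∈ E | φ e ∈ s.image φ ∪ y} = s := by
    intro s hs y hy
    ext e
    have hy : e ∈ E → φ e ∉ y := fun he hey =>
      disjoint_left.1 hG (mem_image_of_mem φ he) (mem_powerset.1 hy hey)
    simp only [mem_filter, mem_union, hφ.mem_finset_image]
    grind
  calc
    _ = ∑ s ∈ E.powerset, ∑ y ∈ G.powerset,
          if {e ∈ E | φ e ∈ s.image φ ∪ y} = x then f (s.image φ ∪ y) else 0 := by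
      rw [sum_filter, sum_powerset_union hG, powerset_image,
        sum_image fun _ _ _ _ h => image_injective hφ h]
    _ = ∑ s ∈ E.powerset, if s = x then ∑ y ∈ G.powerset, f (s.image φ ∪ y) else 0 := by
      refine sum_congr rfl fun s hs => ?_
      rw [sum_congr rfl fun y hy => by rw [htrace s hs y hy]]
      split_ifs <;> simp
    _ = _ := by rw [sum_ite_eq' .., if_pos (mem_powerset.2 hx)]

theorem sum_fiber_div_sum {α β K : Type*} [DecidableEq β] [Semifield K]
    {s : Finset α} {t : Finset β} {g : α → β} (hg : ∀ a ∈ s, g a ∈ t)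
    {f : α → K} {h : β → K} {c : K} (hc : c ≠ 0)
    (hfiber : ∀ b ∈ t, ∑ a ∈ s with g a = b, f a = c * h b) {b : β} (hb : b ∈ t) :
    (∑ a ∈ s with g a = b, f a) / ∑ a ∈ s, f a = h b / ∑ b ∈ t, h b := by
  rw [← sum_fiberwise_of_maps_to hg, sum_congr rfl hfiber, ← mul_sum, hfiber b hb,
    mul_div_mul_left _ _ hc]

end PowersetSums

section Matching

open Finset

variable {W : Type*}

/-- No edge of `F` shares a vertex with an edge of `G`. -/
def VertexDisjoint (F G : Finset (Sym2 W)) : Prop :=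
  ∀ e ∈ F, ∀ f ∈ G, ∀ v ∈ e, v ∉ f

theorem VertexDisjoint.disjoint {F G : Finset (Sym2 W)} (h : VertexDisjoint F G) :
    Disjoint F G :=
  disjoint_left.2 fun e hF hG => h e hF e hG _ e.out_fst_mem e.out_fst_mem

variable [DecidableEq W]

theorem degU9_eq_zero_iff {x : Finset (Sym2 W)} {v : W} :
    degU9 x v = 0 ↔ ∀ e ∈ x, v ∉ e := by
  rw [degU9, card_eq_zero, filter_eq_empty_iff]

theorem degU9_union {x y : Finset (Sym2 W)} (h : Disjoint x y) (v : W) :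
    degU9 (x ∪ y) v = degU9 x v + degU9 y v := by
  rw [degU9, filter_union, card_union_of_disjoint (disjoint_filter_filter h), degU9, degU9]

theorem degU9_union_le_one_iff {x y : Finset (Sym2 W)} (h : Disjoint x y) :
    (∀ v, degU9 (x ∪ y) v ≤ 1) ↔
      (∀ e ∈ y, ∀ v ∈ e, degU9 x v = 0) ∧ (∀ v, degU9 x v ≤ 1) ∧ ∀ v, degU9 y v ≤ 1 := by
  have hzero : (∀ e ∈ y, ∀ v ∈ e, degU9 x v = 0) ↔ ∀ v, degU9 y v ≠ 0 → degU9 x v = 0 := by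
    simp only [ne_eq, degU9_eq_zero_iff (x := y), not_forall, not_not]
    grind
  simp only [degU9_union h, hzero]
  grind

theorem prod_prod_mem_eq_prod_pow_degU9 {M : Type*} [CommMonoid M] [Fintype W]
    (x : Finset (Sym2 W)) (f : W → M) :
    ∏ e ∈ x, ∏ v with v ∈ e, f v = ∏ v, f v ^ degU9 x v := by
  simp only [prod_filter]
  rw [prod_comm]
  refine prod_congr rfl fun v _ => ?_
  rw [← prod_filter, prod_const, degU9]

theorem degU9_eq_card_neighbors [Fintype W] (x : Finset (Sym2 W)) (v : W) :
    degU9 x v = #{u | s(v, u) ∈ x} := by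
  have himage : {e ∈ x | v ∈ e} = ({u | s(v, u) ∈ x} : Finset W).image (s(v, ·)) := by
    ext e
    simp only [mem_filter, mem_image, mem_univ, true_and]
    constructor
    · rintro ⟨he, u, rfl⟩
      exact ⟨u, he, rfl⟩
    · rintro ⟨u, hu, rfl⟩
      exact ⟨hu, Sym2.mem_mk_left v u⟩
  rw [degU9, himage, card_image_of_injective _ fun _ _ => Sym2.congr_right.1]

variable [Fintype W]

/-- The edges of `F` which are left when the endpoints of all edges of `m` are deleted. -/
def edgesAvoiding (F m : Finset (Sym2 W)) : Finset (Sym2 W) :=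
  {e ∈ F | ∀ v ∈ e, degU9 m v = 0}

/-- The partition function `Z_mat` of the matchings of the graph with edge set `F`. -/
def matchingSum (w : Sym2 W → ℝ) (F : Finset (Sym2 W)) : ℝ :=
  ∑ x ∈ F.powerset, wMat9 w x

theorem mem_edgesAvoiding_singleton {F : Finset (Sym2 W)} {e f : Sym2 W} :
    f ∈ edgesAvoiding F {e} ↔ f ∈ F ∧ ∀ v ∈ f, v ∉ e := by
  simp [edgesAvoiding, degU9_eq_zero_iff]

theorem VertexDisjoint.edgesAvoiding_eq {F G m : Finset (Sym2 W)} (h : VertexDisjoint F G)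
    (hm : m ⊆ F) : edgesAvoiding G m = G :=
  filter_true_of_mem fun f hf v hv =>
    degU9_eq_zero_iff.2 fun e he hve => h e (hm he) f hf v hve hv

variable (w : Sym2 W → ℝ)

theorem wMat9_singleton (e : Sym2 W) : wMat9 w {e} = w e := by
  have hdeg (v : W) : degU9 {e} v ≤ 1 := card_filter_le _ _
  simp [wMat9, hdeg]

theorem wMat9_union {m y : Finset (Sym2 W)} (h : Disjoint m y) :
    wMat9 w (m ∪ y) =
      if ∀ e ∈ y, ∀ v ∈ e, degU9 m v = 0 then wMat9 w m * wMat9 w y else 0 := by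
  simp only [wMat9, degU9_union_le_one_iff h, prod_union h, ite_and _ (_ ∧ _),
    ite_zero_mul_ite_zero]

theorem sum_powerset_wMat9_union {m F : Finset (Sym2 W)} (h : Disjoint m F) :
    ∑ y ∈ F.powerset, wMat9 w (m ∪ y) = wMat9 w m * matchingSum w (edgesAvoiding F m) := by
  have hpowerset : {y ∈ F.powerset | ∀ e ∈ y, ∀ v ∈ e, degU9 m v = 0} =
      (edgesAvoiding F m).powerset := by
    ext y
    simp only [edgesAvoiding, mem_filter, mem_powerset, subset_iff, ← forall₂_and]
  rw [matchingSum, mul_sum, ← hpowerset, sum_filter]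
  exact sum_congr rfl fun y hy => wMat9_union w (h.mono_right (mem_powerset.1 hy))

theorem matchingSum_empty : matchingSum w ∅ = 1 := by
  simp [matchingSum, wMat9, degU9]

theorem matchingSum_insert {e : Sym2 W} {F : Finset (Sym2 W)} (he : e ∉ F) :
    matchingSum w (insert e F) = matchingSum w F + w e * matchingSum w (edgesAvoiding F {e}) := by
  rw [matchingSum, sum_powerset_insert he, ← matchingSum, ← wMat9_singleton w e,
    ← sum_powerset_wMat9_union w (disjoint_singleton_left.2 he)]
  simp only [insert_eq]

theorem matchingSum_union_star {v : W} {F S : Finset (Sym2 W)} (hF : ∀ e ∈ F, v ∉ e)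
    (hS : ∀ e ∈ S, v ∈ e) :
    matchingSum w (F ∪ S) =
      matchingSum w F + ∑ e ∈ S, w e * matchingSum w (edgesAvoiding F {e}) := by
  induction S using Finset.induction_on with
  | empty => simp
  | insert e S he ih =>
    obtain ⟨hve, hvS⟩ := forall_mem_insert .. |>.1 hS
    have hnotMem : e ∉ F ∪ S := by grind
    have havoid : edgesAvoiding (F ∪ S) {e} = edgesAvoiding F {e} := by
      ext f
      simp only [mem_edgesAvoiding_singleton]
      grind
    rw [union_insert, matchingSum_insert w hnotMem, havoid, ih hvS, sum_insert he]
    ring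

theorem matchingSum_union {F G : Finset (Sym2 W)} (h : VertexDisjoint F G) :
    matchingSum w (F ∪ G) = matchingSum w F * matchingSum w G := by
  rw [matchingSum, sum_powerset_union h.disjoint, matchingSum, sum_mul]
  refine sum_congr rfl fun x hx => ?_
  have hxF := mem_powerset.1 hx
  rw [sum_powerset_wMat9_union w (h.disjoint.mono_left hxF), h.edgesAvoiding_eq hxF]

theorem matchingSum_biUnion {ι : Type*} {s : Finset ι} {F : ι → Finset (Sym2 W)}
    (h : (s : Set ι).Pairwise fun i j => VertexDisjoint (F i) (F j)) :
    matchingSum w (s.biUnion F) = ∏ i ∈ s, matchingSum w (F i) := by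
  classical
  induction s using Finset.induction_on with
  | empty => simp [matchingSum_empty]
  | insert i s hi ih =>
    have hdisj : VertexDisjoint (F i) (s.biUnion F) := by
      intro e he f hf
      obtain ⟨j, hj, hfj⟩ := mem_biUnion.1 hf
      exact h (mem_insert_self i s) (mem_insert_of_mem hj) (by grind) e he f hfj
    rw [biUnion_insert, matchingSum_union w hdisj, prod_insert hi,
      ih (h.mono (coe_subset.2 (subset_insert i s)))]

end Matching

section CompleteGraph

open Finset

/-- The partition function of the matchings of the complete graph on `n` vertices in which every
edge has weight `b`. In the recursion a chosen one of the `n + 2` vertices is either unmatched or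
matched to one of the `n + 1` others. -/
def completeMatchingSum {R : Type*} [Semiring R] (b : R) : ℕ → R
  | 0 => 1
  | 1 => 1
  | n + 2 => completeMatchingSum b (n + 1) + (n + 1) * b * completeMatchingSum b n

/-- The partition function of the matchings of the complete graph on `n` vertices and one further
vertex, with weight `a` on the edges at the further vertex and weight `b` on the others. In the term
for `n = 0` the truncated `n - 1` is multiplied by `0`. -/
def conedMatchingSum {R : Type*} [Semiring R] (a b : R) (n : ℕ) : R :=
  completeMatchingSum b n + n * (a * completeMatchingSum b (n - 1))

theorem conedMatchingSum_self {R : Type*} [Semiring R] (b : R) (n : ℕ) :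
    conedMatchingSum b b n = completeMatchingSum b (n + 1) := by
  cases n with
  | zero => simp [conedMatchingSum, completeMatchingSum]
  | succ n => simp [conedMatchingSum, completeMatchingSum, mul_assoc]

theorem pow_mul_conedMatchingSum {K : Type*} [Field K] {m a b α : K}
    (hm : m ^ 2 * (1 + a) ^ 3 = 1 + 3 * a + 3 * a ^ 2) (hb : b = a ^ 2 / (1 + a))
    (hα : α = m * (1 + a)) {n d : ℕ} (hnd : n + d = 3) :
    α ^ d * conedMatchingSum a b n =
      (1 + 3 * a + 3 * a ^ 2) * if Odd d then m else 1 := by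
  have ha : 1 + a ≠ 0 := fun h => by
    obtain rfl := eq_neg_of_add_eq_zero_right h
    norm_num at hm
  have hb' : b * (1 + a) = a ^ 2 := by rw [hb, div_mul_cancel₀ _ ha]
  have hzero : conedMatchingSum a b 0 = 1 := by simp [conedMatchingSum, completeMatchingSum]
  have hone : conedMatchingSum a b 1 = 1 + a := by simp [conedMatchingSum, completeMatchingSum]
  have htwo : conedMatchingSum a b 2 = 1 + b + 2 * a := by
    simp [conedMatchingSum, completeMatchingSum]
  have hthree : conedMatchingSum a b 3 = 1 + b + 2 * b + 3 * (a * (1 + b)) := by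
    norm_num [conedMatchingSum, completeMatchingSum]
  subst hα
  obtain ⟨rfl, rfl⟩ | ⟨rfl, rfl⟩ | ⟨rfl, rfl⟩ | ⟨rfl, rfl⟩ :
      n = 3 ∧ d = 0 ∨ n = 2 ∧ d = 1 ∨ n = 1 ∧ d = 2 ∨ n = 0 ∧ d = 3 := by omega
  · rw [hthree, if_neg (by decide)]
    linear_combination 3 * hb'
  · rw [htwo, if_pos (by decide)]
    linear_combination m * hb'
  · rw [hone, if_neg (by decide)]
    linear_combination hm
  · rw [hzero, if_pos (by decide)]
    linear_combination m * hm

variable {W : Type*} [DecidableEq W]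

/-- The edge set of the complete graph on the vertex set `A`. -/
def completeEdges (A : Finset W) : Finset (Sym2 W) :=
  {e ∈ A.sym2 | ¬ e.IsDiag}

theorem mem_completeEdges {A : Finset W} {e : Sym2 W} :
    e ∈ completeEdges A ↔ (∀ v ∈ e, v ∈ A) ∧ ¬ e.IsDiag := by
  rw [completeEdges, mem_filter, mem_sym2_iff]

theorem vertexDisjoint_completeEdges {A B : Finset W} (h : Disjoint A B) :
    VertexDisjoint (completeEdges A) (completeEdges B) :=
  fun _ he _ hf v hve hvf =>
    disjoint_left.1 h ((mem_completeEdges.1 he).1 v hve) ((mem_completeEdges.1 hf).1 v hvf)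

theorem completeEdges_insert {A : Finset W} {v : W} (hv : v ∉ A) :
    completeEdges (insert v A) = completeEdges A ∪ A.image (s(v, ·)) := by
  ext e
  induction e with | _ a b
  simp only [mem_union, mem_completeEdges, mem_image, Sym2.mk_isDiag_iff, Sym2.mem_iff,
    Sym2.eq_iff, mem_insert]
  grind

variable [Fintype W]

theorem edgesAvoiding_completeEdges (A : Finset W) (m : Finset (Sym2 W)) :
    edgesAvoiding (completeEdges A) m = completeEdges {v ∈ A | degU9 m v = 0} := by
  ext e
  simp only [edgesAvoiding, mem_filter, mem_completeEdges]
  grind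

theorem edgesAvoiding_completeEdges_singleton {A : Finset W} {v : W} (hv : v ∉ A) (u : W) :
    edgesAvoiding (completeEdges A) {s(v, u)} = completeEdges (A.erase u) := by
  rw [edgesAvoiding_completeEdges]
  congr 1
  ext a
  simp only [mem_filter, degU9_eq_zero_iff, mem_singleton, forall_eq, Sym2.mem_iff, mem_erase]
  grind

theorem matchingSum_completeEdges_insert (w : Sym2 W → ℝ) {A : Finset W} {v : W} (hv : v ∉ A) :
    matchingSum w (completeEdges (insert v A)) =
      matchingSum w (completeEdges A) +
        ∑ u ∈ A, w s(v, u) * matchingSum w (completeEdges (A.erase u)) := by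
  have hF : ∀ e ∈ completeEdges A, v ∉ e := fun e he hve => hv ((mem_completeEdges.1 he).1 v hve)
  have hS : ∀ e ∈ A.image (s(v, ·)), v ∈ e := forall_mem_image.2 fun _ _ => Sym2.mem_mk_left ..
  rw [completeEdges_insert hv, matchingSum_union_star w hF hS,
    sum_image fun _ _ _ _ => Sym2.congr_right.1]
  simp only [edgesAvoiding_completeEdges_singleton hv]

theorem matchingSum_completeEdges {w : Sym2 W → ℝ} {A : Finset W} {b : ℝ}
    (hb : ∀ u ∈ A, ∀ v ∈ A, u ≠ v → w s(u, v) = b) :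
    matchingSum w (completeEdges A) = completeMatchingSum b #A := by
  induction hn : #A using Nat.strong_induction_on generalizing A with | _ n ih
  obtain rfl | ⟨v, hv⟩ := A.eq_empty_or_nonempty
  · obtain rfl : 0 = n := hn
    simp [completeEdges, matchingSum_empty, completeMatchingSum]
  obtain ⟨A, hvA, rfl⟩ : ∃ B, v ∉ B ∧ insert v B = A :=
    ⟨A.erase v, notMem_erase v A, insert_erase hv⟩
  rw [card_insert_of_notMem hvA] at hn
  subst hn
  have hbA : ∀ u ∈ A, ∀ v ∈ A, u ≠ v → w s(u, v) = b := fun u hu v hv =>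
    hb u (mem_insert_of_mem hu) v (mem_insert_of_mem hv)
  have hterm : ∀ u ∈ A, w s(v, u) * matchingSum w (completeEdges (A.erase u)) =
      b * completeMatchingSum b (#A - 1) := fun u hu => by
    rw [hb v (mem_insert_self v A) u (mem_insert_of_mem hu) (by grind),
      ih (#A - 1) (by omega) (fun x hx y hy => hbA x (mem_of_mem_erase hx) y (mem_of_mem_erase hy))
        (card_erase_of_mem hu)]
  rw [matchingSum_completeEdges_insert w hvA, ih #A (by omega) hbA rfl, sum_congr rfl hterm,
    sum_const, nsmul_eq_mul, ← conedMatchingSum_self, conedMatchingSum]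

theorem matchingSum_completeEdges_insert_of_uniform {w : Sym2 W → ℝ} {A : Finset W} {c : W}
    {a b : ℝ} (hc : c ∉ A) (ha : ∀ v ∈ A, w s(c, v) = a)
    (hb : ∀ u ∈ A, ∀ v ∈ A, u ≠ v → w s(u, v) = b) :
    matchingSum w (completeEdges (insert c A)) = conedMatchingSum a b #A := by
  have hterm : ∀ u ∈ A, w s(c, u) * matchingSum w (completeEdges (A.erase u)) =
      a * completeMatchingSum b (#A - 1) := fun u hu => by
    rw [ha u hu, matchingSum_completeEdges fun x hx y hy =>
      hb x (mem_of_mem_erase hx) y (mem_of_mem_erase hy), card_erase_of_mem hu]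
  rw [matchingSum_completeEdges_insert w hc, matchingSum_completeEdges hb, sum_congr rfl hterm,
    sum_const, nsmul_eq_mul, conedMatchingSum]

end CompleteGraph

section Gadget

open Finset

variable {V : Type*}

theorem phi9_injective : Function.Injective (phi9 : Sym2 V → Sym2 (V ⊕ V × V)) := by
  intro e f
  induction e with | _ a b
  induction f with | _ c d
  simp only [phi9, Sym2.lift_mk, Sym2.eq_iff, Sum.inr.injEq, Prod.mk.injEq]
  tauto

theorem inr_mem_phi9 {i j : V} {e : Sym2 V} :
    (Sum.inr (i, j) : V ⊕ V × V) ∈ phi9 e ↔ e = s(i, j) := by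
  induction e with | _ a b
  simp only [phi9, Sym2.lift_mk, Sym2.mem_iff, Sym2.eq_iff, Sum.inr.injEq, Prod.mk.injEq]
  grind

theorem inl_notMem_phi9 (i : V) (e : Sym2 V) : (Sum.inl i : V ⊕ V × V) ∉ phi9 e := by
  induction e with | _ a b
  simp [phi9]

variable [DecidableEq V]

theorem degU9_image_phi9_inl (x : Finset (Sym2 V)) (i : V) :
    degU9 (x.image phi9) (Sum.inl i) = 0 := by
  simp [degU9_eq_zero_iff, inl_notMem_phi9]

theorem degU9_image_phi9_inr (x : Finset (Sym2 V)) (i j : V) :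
    degU9 (x.image phi9) (Sum.inr (i, j)) = if s(i, j) ∈ x then 1 else 0 := by
  rw [degU9, filter_image, card_image_of_injective _ phi9_injective]
  simp only [inr_mem_phi9, filter_eq', apply_ite card, card_singleton, card_empty]

variable [Fintype V]

theorem wMat9_image_phi9 (w : Sym2 (V ⊕ V × V) → ℝ) (x : Finset (Sym2 V)) :
    wMat9 w (x.image phi9) = ∏ e ∈ x, w (phi9 e) := by
  have hmatching : ∀ v, degU9 (x.image phi9) v ≤ 1 := by
    rintro (i | ⟨i, j⟩)
    · simp only [degU9_image_phi9_inl, zero_le]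
    · rw [degU9_image_phi9_inr]
      split_ifs <;> simp
  rw [wMat9, if_pos hmatching, prod_image phi9_injective.injOn]

theorem inl_mem_gadgetVerts9 {E : Finset (Sym2 V)} {i k : V} :
    Sum.inl k ∈ gadgetVerts9 E i ↔ k = i := by
  simp [gadgetVerts9]

theorem inr_mem_gadgetVerts9 {E : Finset (Sym2 V)} {i k j : V} :
    Sum.inr (k, j) ∈ gadgetVerts9 E i ↔ k = i ∧ s(i, j) ∈ E := by
  simp only [gadgetVerts9, mem_insert, reduceCtorEq, mem_image, mem_filter, mem_univ, true_and,
    Sum.inr.injEq, Prod.mk.injEq, false_or]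
  grind

theorem disjoint_gadgetVerts9 (E : Finset (Sym2 V)) {i j : V} (hij : i ≠ j) :
    Disjoint (gadgetVerts9 E i) (gadgetVerts9 E j) := by
  rw [disjoint_left]
  rintro (k | ⟨k, l⟩) <;> simp only [inl_mem_gadgetVerts9, inr_mem_gadgetVerts9] <;> grind

theorem gadgetEdges9_eq_completeEdges (E : Finset (Sym2 V)) (i : V) :
    gadgetEdges9 E i = completeEdges (gadgetVerts9 E i) := by
  ext e
  induction e with | _ a b
  simp only [gadgetEdges9, mem_image, mem_filter, mem_product, Prod.exists, mem_completeEdges,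
    Sym2.mk_isDiag_iff, Sym2.ball, Sym2.eq_iff]
  grind

theorem disjoint_image_phi9_biUnion_gadgetEdges9 (x E : Finset (Sym2 V)) :
    Disjoint (x.image phi9) (univ.biUnion (gadgetEdges9 E)) := by
  rw [disjoint_left, forall_mem_image]
  intro e _ he
  obtain ⟨i, -, hi⟩ := mem_biUnion.1 he
  rw [gadgetEdges9_eq_completeEdges, mem_completeEdges] at hi
  induction e with | _ a b
  obtain ⟨hverts, hdiag⟩ := hi
  have ha := (inr_mem_gadgetVerts9.1 (hverts (.inr (a, b)) (inr_mem_phi9.2 rfl))).1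
  have hb := (inr_mem_gadgetVerts9.1 (hverts (.inr (b, a)) (inr_mem_phi9.2 Sym2.eq_swap))).1
  subst ha hb
  exact hdiag rfl

theorem edgesAvoiding_gadgetEdges9 (E x : Finset (Sym2 V)) (i : V) :
    edgesAvoiding (gadgetEdges9 E i) (x.image phi9) = gadgetEdges9 (E \ x) i := by
  simp only [gadgetEdges9_eq_completeEdges, edgesAvoiding_completeEdges]
  congr 1
  ext (k | ⟨k, j⟩)
  · simp [inl_mem_gadgetVerts9, degU9_image_phi9_inl]
  · simp only [mem_filter, inr_mem_gadgetVerts9, degU9_image_phi9_inr, mem_sdiff]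
    grind

theorem matchingSum_biUnion_gadgetEdges9 (w : Sym2 (V ⊕ V × V) → ℝ) (E : Finset (Sym2 V)) :
    matchingSum w (univ.biUnion (gadgetEdges9 E)) = ∏ i, matchingSum w (gadgetEdges9 E i) := by
  refine matchingSum_biUnion w fun i _ j _ hij => ?_
  simp only [gadgetEdges9_eq_completeEdges]
  exact vertexDisjoint_completeEdges (disjoint_gadgetVerts9 E hij)

theorem sum_fiber_wMat9 (w : Sym2 (V ⊕ V × V) → ℝ) {E x : Finset (Sym2 V)} (hx : x ⊆ E) :
    ∑ z ∈ (E.image phi9 ∪ univ.biUnion (gadgetEdges9 E)).powerset with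
        {e ∈ E | phi9 e ∈ z} = x, wMat9 w z =
      (∏ e ∈ x, w (phi9 e)) * ∏ i, matchingSum w (gadgetEdges9 (E \ x) i) := by
  have havoid : edgesAvoiding (univ.biUnion (gadgetEdges9 E)) (x.image phi9) =
      univ.biUnion (gadgetEdges9 (E \ x)) := by
    rw [edgesAvoiding, filter_biUnion]
    exact biUnion_congr rfl fun i _ => edgesAvoiding_gadgetEdges9 E x i
  rw [sum_powerset_fiber phi9_injective (disjoint_image_phi9_biUnion_gadgetEdges9 E E) hx,
    sum_powerset_wMat9_union w (disjoint_image_phi9_biUnion_gadgetEdges9 x E), havoid,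
    wMat9_image_phi9, matchingSum_biUnion_gadgetEdges9]

theorem matchingSum_gadgetEdges9 {w : Sym2 (V ⊕ V × V) → ℝ} {E : Finset (Sym2 V)} {i : V}
    {a b : ℝ} (ha : ∀ j, s(i, j) ∈ E → w s(Sum.inl i, Sum.inr (i, j)) = a)
    (hb : ∀ j k, s(i, j) ∈ E → s(i, k) ∈ E → j ≠ k →
      w s(Sum.inr (i, j), Sum.inr (i, k)) = b) :
    matchingSum w (gadgetEdges9 E i) = conedMatchingSum a b (degU9 E i) := by
  have hcard : #(({j | s(i, j) ∈ E} : Finset V).image fun j => (Sum.inr (i, j) : V ⊕ V × V)) =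
      degU9 E i := by
    rw [degU9_eq_card_neighbors]
    exact card_image_of_injective _ fun j k h => by simpa using h
  rw [gadgetEdges9_eq_completeEdges, gadgetVerts9, ← hcard]
  refine matchingSum_completeEdges_insert_of_uniform (by simp) ?_ ?_
  · simpa [forall_mem_image] using ha
  · simp only [forall_mem_image, mem_filter, mem_univ, true_and]
    exact fun j hj k hk hjk => hb j k hj hk fun h => hjk (h ▸ rfl)

theorem prod_phi9_eq_prod_mul_prod_pow_degU9 {w : Sym2 (V ⊕ V × V) → ℝ} {lam : Sym2 V → ℝ}
    {al : V → ℝ} {x : Finset (Sym2 V)} (hx : ∀ e ∈ x, ¬ e.IsDiag)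
    (hw : ∀ i j, s(i, j) ∈ x →
      w s(Sum.inr (i, j), Sum.inr (j, i)) = lam s(i, j) * al i * al j) :
    ∏ e ∈ x, w (phi9 e) = (∏ e ∈ x, lam e) * ∏ i, al i ^ degU9 x i := by
  rw [← prod_prod_mem_eq_prod_pow_degU9, ← prod_mul_distrib]
  refine prod_congr rfl fun e he => ?_
  induction e with | _ i j
  have hij : i ≠ j := fun h => hx _ he (Sym2.mk_isDiag_iff.2 h)
  have hends : ({v | v ∈ s(i, j)} : Finset V) = {i, j} := by
    ext
    simp
  rw [hends, prod_pair hij, ← mul_assoc]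
  exact hw i j he

theorem stmt9_general {E : Finset (Sym2 V)} (hE : ∀ e ∈ E, ¬ e.IsDiag)
    (hcubic : ∀ v, degU9 E v = 3) {lam : Sym2 V → ℝ} {mu l2 l1 al : V → ℝ}
    (hcubiceq : ∀ i, mu i ^ 2 * (1 + l2 i) ^ 3 = 1 + 3 * l2 i + 3 * l2 i ^ 2)
    (hl1 : ∀ i, l1 i = l2 i ^ 2 / (1 + l2 i)) (hal : ∀ i, al i = mu i * (1 + l2 i))
    {lam' : Sym2 (V ⊕ V × V) → ℝ}
    (hlam'1 : ∀ i j, s(i, j) ∈ E →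
      lam' s(Sum.inr (i, j), Sum.inr (j, i)) = lam s(i, j) * al i * al j)
    (hlam'2 : ∀ i j, s(i, j) ∈ E → lam' s(Sum.inl i, Sum.inr (i, j)) = l2 i)
    (hlam'3 : ∀ i j k, s(i, j) ∈ E → s(i, k) ∈ E → j ≠ k →
      lam' s(Sum.inr (i, j), Sum.inr (i, k)) = l1 i)
    {x : Finset (Sym2 V)} (hx : x ∈ E.powerset) :
    ∑ x' ∈ (E.image phi9 ∪ univ.biUnion (gadgetEdges9 E)).powerset with
        {e ∈ E | phi9 e ∈ x'} = x, wMat9 lam' x' =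
      (∏ i, (1 + 3 * l2 i + 3 * l2 i ^ 2)) * wSubs9 lam mu x := by
  have hxE : x ⊆ E := mem_powerset.1 hx
  have hdeg : ∀ i, degU9 (E \ x) i + degU9 x i = 3 := fun i => by
    rw [← degU9_union sdiff_disjoint, sdiff_union_of_subset hxE, hcubic]
  have hgadget : ∀ i, al i ^ degU9 x i * matchingSum lam' (gadgetEdges9 (E \ x) i) =
      (1 + 3 * l2 i + 3 * l2 i ^ 2) * if Odd (degU9 x i) then mu i else 1 := fun i => by
    rw [matchingSum_gadgetEdges9 (fun j hj => hlam'2 i j (mem_sdiff.1 hj).1)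
      fun j k hj hk => hlam'3 i j k (mem_sdiff.1 hj).1 (mem_sdiff.1 hk).1]
    exact pow_mul_conedMatchingSum (hcubiceq i) (hl1 i) (hal i) (hdeg i)
  have hlinks : ∏ e ∈ x, lam' (phi9 e) = (∏ e ∈ x, lam e) * ∏ i, al i ^ degU9 x i :=
    prod_phi9_eq_prod_mul_prod_pow_degU9 (fun e he => hE e (hxE he))
      fun i j hij => hlam'1 i j (hxE hij)
  rw [sum_fiber_wMat9 lam' hxE, hlinks, wSubs9, prod_filter, mul_left_comm, mul_assoc,
    ← prod_mul_distrib, ← prod_mul_distrib, prod_congr rfl fun i _ => hgadget i]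

end Gadget

/-- Reduction of the subgraphs world with positive field on a
cubic graph to weighted matchings.  With the same gadget graph `G'` as in the
zero-field case, choose `λ2(i) ≥ 0` solving `μ(i)²(1+λ2(i))³ =
1 + 3λ2(i) + 3λ2(i)²`, set `λ1(i) = λ2(i)²/(1+λ2(i))`, `α(i) = μ(i)(1+λ2(i))`,
and give edge `{v_{ij},v_{ik}}` weight `λ1(i)`, edge `{d_i,v_{ij}}` weight
`λ2(i)`, and edge `{v_{ij},v_{ji}}` weight `λ({i,j})α(i)α(j)`.  Then the
pushforward of the matching distribution on `G'` under `x' ↦ x' ∘ φ` equals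
the subgraphs-world distribution on `G` with parameters `λ, μ`. -/
theorem stmt9 {V : Type*} [Fintype V] [DecidableEq V]
    (E : Finset (Sym2 V)) (hE : ∀ e ∈ E, ¬ e.IsDiag)
    (hcubic : ∀ v : V, (E.filter (fun e => v ∈ e)).card = 3)
    (lam : Sym2 V → ℝ) (hlam : ∀ e ∈ E, lam e ∈ Set.Icc (0 : ℝ) 1)
    (mu : V → ℝ) (hmu : ∀ v : V, mu v ∈ Set.Ioc (0 : ℝ) 1)
    -- the gadget parameters
    (l2 l1 al : V → ℝ)
    (hl2 : ∀ i : V, 0 ≤ l2 i)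
    (hcubiceq : ∀ i : V,
      (mu i) ^ 2 * (1 + l2 i) ^ 3 = 1 + 3 * l2 i + 3 * (l2 i) ^ 2)
    (hl1 : ∀ i : V, l1 i = (l2 i) ^ 2 / (1 + l2 i))
    (hal : ∀ i : V, al i = mu i * (1 + l2 i))
    -- the new edge set
    (E' : Finset (Sym2 (V ⊕ V × V)))
    (hE'def : E' = E.image phi9 ∪ Finset.univ.biUnion (gadgetEdges9 E))
    -- the new edge weights
    (lam' : Sym2 (V ⊕ V × V) → ℝ)
    (hlam'1 : ∀ i j : V, s(i, j) ∈ E →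
      lam' s(Sum.inr (i, j), Sum.inr (j, i)) = lam s(i, j) * al i * al j)
    (hlam'2 : ∀ i j : V, s(i, j) ∈ E →
      lam' s(Sum.inl i, Sum.inr (i, j)) = l2 i)
    (hlam'3 : ∀ i j k : V, s(i, j) ∈ E → s(i, k) ∈ E → j ≠ k →
      lam' s(Sum.inr (i, j), Sum.inr (i, k)) = l1 i) :
    ∀ x ∈ E.powerset,
      (∑ x' ∈ E'.powerset.filter
            (fun x' => E.filter (fun e => phi9 e ∈ x') = x),
          wMat9 lam' x') /
        (∑ y' ∈ E'.powerset, wMat9 lam' y')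
      = wSubs9 lam mu x / (∑ y ∈ E.powerset, wSubs9 lam mu y) := by
  subst hE'def
  have hconst : ∏ i, (1 + 3 * l2 i + 3 * l2 i ^ 2) ≠ 0 :=
    Finset.prod_ne_zero_iff.2 fun i _ => by nlinarith [sq_nonneg (2 * l2 i + 1)]
  intro x hx
  exact sum_fiber_div_sum (fun x' _ => Finset.mem_powerset.2 (Finset.filter_subset _ _)) hconst
    (fun y hy => stmt9_general hE hcubic hcubiceq hl1 hal hlam'1 hlam'2 hlam'3 hy) hx
end
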